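/- arXiv:1003.4954 — 3 statements merged into one kernel-verified Lean document; each statement's English description precedes it below -/
import Mathlib

section
/- Let (f_n)_{n∈ℕ} be a q-holonomic sequence of rational functions in ℚ(q). Then the sequence (f_n')_{n∈ℕ} of formal derivatives of f_n with respect to q is also q-holonomic. -/
/-- The formal derivative of a rational function `f = num/denom ∈ ℚ(q)`,
given by the quotient rule `(num' * denom - num * denom') / denom ^ 2`. -/
noncomputable def ratDeriv (f : RatFunc ℚ) : RatFunc ℚ :=
  RatFunc.mk (Polynomial.derivative f.num * f.denom - f.num * Polynomial.derivative f.denom)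
    (f.denom ^ 2)

/-- A sequence `(f_n)` of rational functions in `ℚ(q)` is `q`-holonomic if there are
`d ≥ 0` and bivariate polynomials `c_0, …, c_d ∈ ℚ[u,v]` with `c_d ≠ 0` such that
`c_d(q^n,q) f_{n+d}(q) + ⋯ + c_0(q^n,q) f_n(q) = 0` for all `n`. -/
def IsQHolonomic (f : ℕ → RatFunc ℚ) : Prop :=
  ∃ (d : ℕ) (c : Fin (d + 1) → MvPolynomial (Fin 2) ℚ),
    c (Fin.last d) ≠ 0 ∧
    ∀ n : ℕ,
      ∑ j : Fin (d + 1),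
        (MvPolynomial.aeval ![RatFunc.X ^ n, RatFunc.X] (c j)) * f (n + j) = 0

/-! Polynomials `c(u, v)` act on sequences by multiplication with `c(q ^ n, q)`, and the shift `E`
is semilinear over `c(u, v) ↦ c(u * v, v)`. A sequence is `q`-holonomic exactly when it lies in an
`E`-stable submodule of finite rank, so the `q`-holonomic sequences form a submodule `H`. If an
additive operator `T` commutes with `E` and with scalars up to errors in `H`, then applying `T` to a
recurrence of `f ∈ H` gives a recurrence for `T f` with right-hand side in `H`, whence `T f ∈ H`.
This first applies to `T f = (n * f n)`, as `E T - T E = E`, and then to the termwise derivative: it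
commutes with `E`, and `q * (d/dq) c(q ^ n, q)` is the value of `n * (u ∂c/∂u) + v ∂c/∂v` at
`(q ^ n, q)`, so that `q` times its commutator with `c` sends `H` into `H`. -/

section Saturation

variable {R M : Type*} [CommRing R] [IsDomain R] [AddCommGroup M] [Module R M]

/-- The saturation of a submodule `N` over a domain: the elements having a nonzero multiple in `N`.
It enlarges `N` without changing its rank, so it replaces passing to the fraction field. -/
def saturation (N : Submodule R M) : Submodule R M :=
  (Submodule.torsion R (M ⧸ N)).comap N.mkQ

theorem mem_saturation {N : Submodule R M} {x : M} :
    x ∈ saturation N ↔ ∃ a : R, a ≠ 0 ∧ a • x ∈ N := by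
  simp only [saturation, Submodule.mem_comap, Submodule.mem_torsion_iff, Subtype.exists,
    mem_nonZeroDivisors_iff_ne_zero, Submonoid.mk_smul, Submodule.mkQ_apply,
    ← Submodule.Quotient.mk_smul, Submodule.Quotient.mk_eq_zero, exists_prop]

theorem le_saturation (N : Submodule R M) : N ≤ saturation N :=
  fun _ hx ↦ mem_saturation.2 ⟨1, one_ne_zero, by rwa [one_smul]⟩

theorem mem_saturation_of_smul_mem {N : Submodule R M} {a : R} (ha : a ≠ 0) {x : M}
    (h : a • x ∈ saturation N) : x ∈ saturation N := by
  obtain ⟨b, hb, hbx⟩ := mem_saturation.1 h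
  exact mem_saturation.2 ⟨b * a, mul_ne_zero hb ha, by rwa [mul_smul]⟩

theorem rank_saturation (N : Submodule R M) :
    Module.rank R (saturation N) = Module.rank R N := by
  have torsion_quotient : Module.rank R (saturation N ⧸ N.submoduleOf (saturation N)) = 0 := by
    refine rank_eq_zero_iff.2 fun y ↦ ?_
    obtain ⟨⟨x, hx⟩, rfl⟩ := Submodule.Quotient.mk_surjective _ y
    obtain ⟨a, ha, hax⟩ := mem_saturation.1 hx
    exact ⟨a, ha, (Submodule.Quotient.mk_eq_zero _).2 hax⟩
  rw [← Submodule.rank_quotient_add_rank (N.submoduleOf (saturation N)), torsion_quotient, zero_add,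
    (Submodule.submoduleOfEquivOfLe (le_saturation N)).rank_eq]

end Saturation

theorem exists_sum_smul_eq_zero_of_not_linearIndependent {R M : Type*} [Ring R]
    [AddCommGroup M] [Module R M] {v : ℕ → M} (hv : ¬ LinearIndependent R v) :
    ∃ (d : ℕ) (c : Fin (d + 1) → R), c (Fin.last d) ≠ 0 ∧ ∑ j : Fin (d + 1), c j • v j = 0 := by
  obtain ⟨l, hl, hl0⟩ := not_linearIndependent_iff_finsupp.1 hv
  obtain ⟨d, hd, hsup⟩ := Finset.exists_mem_eq_sup _ (Finsupp.support_nonempty_iff.2 hl0) id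
  refine ⟨d, fun j ↦ l j, Finsupp.mem_support_iff.1 hd, ?_⟩
  have hsupport : l.support ⊆ Finset.range (d + 1) := by
    simpa [hsup] using Finset.subset_range_sup_succ l.support
  rw [Fin.sum_univ_eq_sum_range (fun j ↦ l j • v j), ← hl]
  exact (Finsupp.sum_of_support_subset l hsupport (fun j a ↦ a • v j)
    fun j _ ↦ zero_smul R (v j)).symm

section OreFinite

open Cardinal

variable {R M : Type*} [CommRing R] [IsDomain R] [AddCommGroup M] [Module R M]
  {τ : R →+* R} {E : M →ₛₗ[τ] M}

/-- The elements of `M` annihilated by a nonzero Ore operator `∑ j, c j • E ^ j`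
(see `mem_oreFinite_iff`), encoded as those lying in an `E`-stable submodule of finite rank. -/
def oreFinite (E : M →ₛₗ[τ] M) : Submodule R M where
  carrier := {x | ∃ N : Submodule R M, Module.rank R N < ℵ₀ ∧ N ≤ N.comap E ∧ x ∈ N}
  zero_mem' := ⟨⊥, by simp [aleph0_pos], bot_le, zero_mem _⟩
  add_mem' := by
    rintro x y ⟨N, hN, hNE, hx⟩ ⟨P, hP, hPE, hy⟩
    refine ⟨N ⊔ P, (Submodule.rank_add_le_rank_add_rank N P).trans_lt (add_lt_aleph0 hN hP),
      sup_le (hNE.trans ?_) (hPE.trans ?_), add_mem (le_sup_left (b := P) hx)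
        (le_sup_right (a := N) hy)⟩
    · exact Submodule.comap_mono le_sup_left
    · exact Submodule.comap_mono le_sup_right
  smul_mem' := fun a _ ⟨N, hN, hNE, hx⟩ ↦ ⟨N, hN, hNE, N.smul_mem a hx⟩

theorem map_mem_oreFinite {x : M} (hx : x ∈ oreFinite E) : E x ∈ oreFinite E := by
  obtain ⟨N, hN, hNE, hxN⟩ := hx
  exact ⟨N, hN, hNE, hNE hxN⟩

theorem iterate_mem_oreFinite {x : M} (hx : x ∈ oreFinite E) (j : ℕ) :
    E^[j] x ∈ oreFinite E := by
  induction j with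
  | zero => exact hx
  | succ j ih => rw [Function.iterate_succ_apply']; exact map_mem_oreFinite ih

theorem saturation_le_comap (hτ : Function.Injective τ) {N : Submodule R M}
    (hN : N ≤ (saturation N).comap E) : saturation N ≤ (saturation N).comap E := by
  intro x hx
  obtain ⟨a, ha, hax⟩ := mem_saturation.1 hx
  refine mem_saturation_of_smul_mem ((map_ne_zero_iff τ hτ).2 ha) ?_
  rw [← map_smulₛₗ]
  exact hN hax

theorem mem_oreFinite_of_recurrence (hτ : Function.Injective τ) {x : M} {d : ℕ}
    {c : Fin (d + 1) → R} (hc : c (Fin.last d) ≠ 0)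
    (h : ∑ j, c j • E^[j] x ∈ oreFinite E) : x ∈ oreFinite E := by
  obtain ⟨N, hN, hNE, hyN⟩ := h
  let P := N ⊔ Submodule.span R (Set.range fun j : Fin d ↦ E^[j] x)
  have rank_P : Module.rank R P < ℵ₀ := by
    refine (Submodule.rank_add_le_rank_add_rank _ _).trans_lt (add_lt_aleph0 hN ?_)
    exact (rank_span_le _).trans_lt (Set.finite_range _).lt_aleph0
  have iterate_mem_P (j : Fin d) : E^[j] x ∈ P :=
    Submodule.mem_sup_right (Submodule.subset_span ⟨j, rfl⟩)
  have leading_mem : c (Fin.last d) • E^[d] x ∈ P := by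
    have hyP : ∑ j, c j • E^[j] x ∈ P := Submodule.mem_sup_left hyN
    rw [Fin.sum_univ_castSucc] at hyP
    exact (P.add_mem_iff_right (sum_mem fun j _ ↦ P.smul_mem _ (iterate_mem_P j))).1 hyP
  have iterate_mem (j : ℕ) (hj : j ≤ d) : E^[j] x ∈ saturation P := by
    rcases hj.lt_or_eq with hj | rfl
    · exact le_saturation P (iterate_mem_P ⟨j, hj⟩)
    · exact mem_saturation.2 ⟨_, hc, leading_mem⟩
  refine ⟨saturation P, by rwa [rank_saturation], saturation_le_comap hτ (sup_le ?_ ?_),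
    iterate_mem 0 d.zero_le⟩
  · exact hNE.trans (Submodule.comap_mono (le_sup_left.trans (le_saturation P)))
  · rw [Submodule.span_le, Set.range_subset_iff]
    intro j
    have := iterate_mem (j + 1) j.2
    rwa [Function.iterate_succ_apply'] at this

theorem mem_oreFinite_of_smul_mem (hτ : Function.Injective τ) {a : R} (ha : a ≠ 0) {x : M}
    (h : a • x ∈ oreFinite E) : x ∈ oreFinite E :=
  mem_oreFinite_of_recurrence (d := 0) (c := fun _ ↦ a) hτ ha (by simpa using h)

theorem mem_oreFinite_iff (hτ : Function.Injective τ) {x : M} :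
    x ∈ oreFinite E ↔
      ∃ (d : ℕ) (c : Fin (d + 1) → R), c (Fin.last d) ≠ 0 ∧ ∑ j, c j • E^[j] x = 0 := by
  constructor
  · rintro ⟨N, hN, hNE, hxN⟩
    have hmaps : Set.MapsTo E N N := fun _ hy ↦ hNE hy
    refine exists_sum_smul_eq_zero_of_not_linearIndependent (v := fun j ↦ E^[j] x)
      fun hli ↦ hN.not_ge ?_
    have hli' : LinearIndependent R fun j : ℕ ↦ (⟨E^[j] x, hmaps.iterate j hxN⟩ : N) :=
      .of_comp N.subtype hli
    exact hli'.aleph0_le_rank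
  · rintro ⟨d, c, hc, h⟩
    exact mem_oreFinite_of_recurrence hτ hc (h ▸ zero_mem _)

theorem iterate_map_sModEq {T : M →+ M}
    (hE : ∀ x ∈ oreFinite E, E (T x) ≡ T (E x) [SMOD oreFinite E])
    {x : M} (hx : x ∈ oreFinite E) (j : ℕ) : E^[j] (T x) ≡ T (E^[j] x) [SMOD oreFinite E] := by
  induction j with
  | zero => rfl
  | succ j ih =>
    simp only [Function.iterate_succ_apply']
    refine SModEq.trans ?_ (hE _ (iterate_mem_oreFinite hx j))
    rw [SModEq.sub_mem, ← map_sub]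
    exact map_mem_oreFinite (SModEq.sub_mem.1 ih)

theorem map_mem_oreFinite_of_sModEq (hτ : Function.Injective τ) {T : M →+ M}
    (hE : ∀ x ∈ oreFinite E, E (T x) ≡ T (E x) [SMOD oreFinite E])
    (hR : ∀ a : R, ∀ x ∈ oreFinite E, a • T x ≡ T (a • x) [SMOD oreFinite E])
    {x : M} (hx : x ∈ oreFinite E) : T x ∈ oreFinite E := by
  obtain ⟨d, c, hc, h⟩ := (mem_oreFinite_iff hτ).1 hx
  refine mem_oreFinite_of_recurrence hτ hc (SModEq.zero.1 ?_)
  calc ∑ j, c j • E^[j] (T x)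
    _ ≡ ∑ j, c j • T (E^[j] x) [SMOD oreFinite E] :=
      SModEq.sum fun j _ ↦ (iterate_map_sModEq hE hx j).smul (c j)
    _ ≡ ∑ j, T (c j • E^[j] x) [SMOD oreFinite E] :=
      SModEq.sum fun j _ ↦ hR (c j) _ (iterate_mem_oreFinite hx j)
    _ = 0 := by rw [← map_sum, h, map_zero]

end OreFinite

section QShift

open MvPolynomial

/-- The substitution `c(u, v) ↦ c(u * v, v)`, which is what `n ↦ n + 1` does to the coefficients
`c(q ^ n, q)`. -/
noncomputable def coeffShift (R : Type*) [CommRing R] :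
    MvPolynomial (Fin 2) R →ₐ[R] MvPolynomial (Fin 2) R :=
  aeval ![X 0 * X 1, X 1]

theorem coeffShift_injective (R : Type*) [CommRing R] [IsDomain R] :
    Function.Injective (coeffShift R : MvPolynomial (Fin 2) R →+* MvPolynomial (Fin 2) R) := by
  let F := FractionRing (MvPolynomial (Fin 2) R)
  let ι : MvPolynomial (Fin 2) R →ₐ[R] F := Algebra.algHom R _ F
  have hι : Function.Injective ι := IsFractionRing.injective _ F
  have hX : ι (X 1) ≠ 0 := (map_ne_zero_iff ι hι).2 (X_ne_zero 1)
  let unshift : MvPolynomial (Fin 2) R →ₐ[R] F := aeval ![ι (X 0) / ι (X 1), ι (X 1)]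
  have unshift_comp : unshift.comp (coeffShift R) = ι := by
    ext i
    fin_cases i
    · simpa [unshift, coeffShift] using div_mul_cancel₀ _ hX
    · simp [unshift, coeffShift]
  have : Function.Injective (unshift.comp (coeffShift R)) := by rwa [unshift_comp]
  exact .of_comp (f := unshift) this

variable {K A : Type*} [CommRing K] [CommRing A] [Algebra K A]

variable (K) in
/-- The value `c(q ^ n, q)` of a bivariate polynomial `c`. -/
noncomputable def qEval (q : A) (n : ℕ) : MvPolynomial (Fin 2) K →ₐ[K] A :=
  aeval ![q ^ n, q]

theorem qEval_coeffShift (q : A) (n : ℕ) (c : MvPolynomial (Fin 2) K) :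
    qEval K q n (coeffShift K c) = qEval K q (n + 1) c := by
  rw [coeffShift, comp_aeval_apply, qEval, qEval]
  congr 2
  ext i
  fin_cases i <;> simp [pow_succ]

theorem derivation_aeval {R A M σ : Type*} [CommRing R] [CommRing A] [Algebra R A]
    [AddCommGroup M] [Module R M] [Module A M] [Fintype σ] (D : Derivation R A M) (x : σ → A)
    (p : MvPolynomial σ R) :
    D (aeval x p) = ∑ i, aeval x (pderiv i p) • D (x i) := by
  classical
  induction p using MvPolynomial.induction_on with
  | C a => simp
  | add p q hp hq => simp only [map_add, hp, hq, add_smul, Finset.sum_add_distrib]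
  | mul_X p i hp =>
    simp [hp, pderiv_X, Pi.single_apply, add_smul, Finset.sum_add_distrib, mul_smul,
      Finset.smul_sum, apply_ite]

theorem mul_derivation_qEval {q : A} (D : Derivation K A A) (hD : D q = 1) (n : ℕ)
    (c : MvPolynomial (Fin 2) K) :
    q * D (qEval K q n c) =
      n * qEval K q n (X 0 * pderiv 0 c) + qEval K q n (X 1 * pderiv 1 c) := by
  have euler : q * D (q ^ n) = n * q ^ n := by
    cases n with
    | zero => simp
    | succ n =>
      rw [D.leibniz_pow, hD, Nat.add_sub_cancel, nsmul_eq_mul, smul_eq_mul]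
      ring
  simp only [qEval, derivation_aeval, Fin.sum_univ_two, Matrix.cons_val_zero, Matrix.cons_val_one,
    hD, smul_eq_mul, map_mul, aeval_X]
  linear_combination aeval ![q ^ n, q] (pderiv 0 c) * euler

/-- Sequences in `A`, as a type of its own depending on `q : A`, so that it can carry the action of
bivariate polynomials `c` by multiplication with `c(q ^ n, q)`. -/
@[nolint unusedArguments]
def QSeq (_q : A) : Type _ := ℕ → A

namespace QSeq

variable {q : A}

instance : AddCommGroup (QSeq q) := inferInstanceAs (AddCommGroup (ℕ → A))

noncomputable instance : Module (MvPolynomial (Fin 2) K) (QSeq q) :=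
  Module.compHom (ℕ → A) (RingHom.pi fun n ↦ (qEval K q n : MvPolynomial (Fin 2) K →+* A))

@[ext]
theorem ext {A : Type*} {q : A} {f g : QSeq q} (h : ∀ n, f n = g n) : f = g := funext h

theorem zero_apply (n : ℕ) : (0 : QSeq q) n = 0 := rfl

theorem smul_apply (c : MvPolynomial (Fin 2) K) (f : QSeq q) (n : ℕ) :
    (c • f) n = qEval K q n c * f n := rfl

theorem sum_apply {ι : Type*} (s : Finset ι) (f : ι → QSeq q) (n : ℕ) :
    (∑ i ∈ s, f i) n = ∑ i ∈ s, f i n :=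
  Finset.sum_apply n s fun i ↦ (f i : ℕ → A)

variable (K q) in
/-- The shift `(f n) ↦ (f (n + 1))`, semilinear over the substitution `coeffShift`. -/
noncomputable def shift :
    QSeq q →ₛₗ[(coeffShift K : MvPolynomial (Fin 2) K →+* MvPolynomial (Fin 2) K)] QSeq q where
  toFun f n := f (n + 1)
  map_add' _ _ := rfl
  map_smul' c f := by
    ext n
    change qEval K q (n + 1) c * f (n + 1) = qEval K q n (coeffShift K c) * f (n + 1)
    rw [qEval_coeffShift]

theorem iterate_shift_apply (f : QSeq q) (j n : ℕ) : (shift K q)^[j] f n = f (n + j) := by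
  induction j generalizing n with
  | zero => rfl
  | succ j ih =>
    rw [Function.iterate_succ_apply']
    exact (ih (n + 1)).trans (by rw [add_right_comm, add_assoc])

/-- Termwise multiplication by the index, `(f n) ↦ (n * f n)`. -/
def indexMul : QSeq q →+ QSeq q :=
  .mk' (fun f n ↦ n * f n) fun f g ↦ funext fun n ↦ mul_add _ (f n) (g n)

theorem shift_indexMul (f : QSeq q) :
    shift K q (indexMul f) = indexMul (shift K q f) + shift K q f := by
  ext n
  change ((n + 1 : ℕ) : A) * f (n + 1) = n * f (n + 1) + f (n + 1)
  push_cast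
  ring

theorem smul_indexMul (c : MvPolynomial (Fin 2) K) (f : QSeq q) :
    c • indexMul f = indexMul (c • f) :=
  QSeq.ext fun n ↦ mul_left_comm (qEval K q n c) (n : A) (f n)

theorem indexMul_mem_oreFinite [IsDomain K] {f : QSeq q} (hf : f ∈ oreFinite (shift K q)) :
    indexMul f ∈ oreFinite (shift K q) := by
  refine map_mem_oreFinite_of_sModEq (coeffShift_injective K) (fun g hg ↦ ?_)
    (fun c g _ ↦ smul_indexMul c g ▸ SModEq.rfl) hf
  rw [SModEq.sub_mem, shift_indexMul, add_sub_cancel_left]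
  exact map_mem_oreFinite hg

/-- Termwise application of a derivation. -/
def derivative (D : Derivation K A A) : QSeq q →+ QSeq q :=
  .mk' (fun f n ↦ D (f n)) fun f g ↦ funext fun n ↦ D.map_add (f n) (g n)

theorem X_smul_derivative_smul (D : Derivation K A A) (hD : D q = 1)
    (c : MvPolynomial (Fin 2) K) (f : QSeq q) :
    (X 1 : MvPolynomial (Fin 2) K) • derivative D (c • f) =
      (X 1 : MvPolynomial (Fin 2) K) • c • derivative D f +
        ((X 0 * pderiv 0 c) • indexMul f + (X 1 * pderiv 1 c) • f) := by
  ext n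
  have qEval_X : qEval K q n (X 1) = q := by simp [qEval]
  change qEval K q n (X 1) * D (qEval K q n c * f n) =
    qEval K q n (X 1) * (qEval K q n c * D (f n)) +
      (qEval K q n (X 0 * pderiv 0 c) * (n * f n) + qEval K q n (X 1 * pderiv 1 c) * f n)
  rw [qEval_X, D.leibniz, smul_eq_mul, smul_eq_mul]
  linear_combination f n * mul_derivation_qEval D hD n c

end QSeq

theorem deriv_qHolonomic_general [IsDomain K] {q : A} (D : Derivation K A A) (hD : D q = 1)
    {f : QSeq q} (hf : f ∈ oreFinite (QSeq.shift K q)) :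
    QSeq.derivative D f ∈ oreFinite (QSeq.shift K q) := by
  refine map_mem_oreFinite_of_sModEq (coeffShift_injective K) (fun g _ ↦ SModEq.rfl)
    (fun c g hg ↦ SModEq.symm (SModEq.sub_mem.2 ?_)) hf
  refine mem_oreFinite_of_smul_mem (coeffShift_injective K) (X_ne_zero (1 : Fin 2)) ?_
  rw [smul_sub, QSeq.X_smul_derivative_smul D hD, add_sub_cancel_left]
  exact add_mem (Submodule.smul_mem _ _ (QSeq.indexMul_mem_oreFinite hg))
    (Submodule.smul_mem _ _ hg)

theorem isQHolonomic_iff_mem_oreFinite (f : QSeq (RatFunc.X : RatFunc ℚ)) :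
    IsQHolonomic f ↔ f ∈ oreFinite (QSeq.shift ℚ RatFunc.X) := by
  rw [mem_oreFinite_iff (coeffShift_injective ℚ)]
  simp only [IsQHolonomic, QSeq.ext_iff, QSeq.sum_apply, QSeq.smul_apply, qEval,
    QSeq.iterate_shift_apply, QSeq.zero_apply]

end QShift

section RatDeriv

open Polynomial

theorem ratDeriv_div (p : ℚ[X]) {q : ℚ[X]} (hq : q ≠ 0) :
    ratDeriv (algebraMap _ _ p / algebraMap _ _ q) =
      algebraMap _ _ (derivative p * q - p * derivative q) / algebraMap _ _ q ^ 2 := by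
  have hq' := RatFunc.algebraMap_ne_zero hq
  generalize hf : (algebraMap _ _ p / algebraMap _ _ q : RatFunc ℚ) = f
  have hd := RatFunc.algebraMap_ne_zero f.denom_ne_zero
  have cross : f.num * q = p * f.denom := (RatFunc.num_mul_eq_mul_denom_iff hq).2 hf.symm
  have cross_deriv := congrArg derivative cross
  rw [derivative_mul, derivative_mul] at cross_deriv
  rw [ratDeriv, RatFunc.mk_eq_div, map_pow, div_eq_div_iff (pow_ne_zero 2 hd) (pow_ne_zero 2 hq')]
  simp only [← map_pow, ← map_mul]
  refine congrArg _ ?_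
  linear_combination q * f.denom * cross_deriv -
    (q * derivative f.denom + f.denom * derivative q) * cross

theorem ratDeriv_add (f g : RatFunc ℚ) : ratDeriv (f + g) = ratDeriv f + ratDeriv g := by
  induction f using RatFunc.induction_on with | f p q hq =>
  induction g using RatFunc.induction_on with | f r s hs =>
  have hq' := RatFunc.algebraMap_ne_zero hq
  have hs' := RatFunc.algebraMap_ne_zero hs
  rw [div_add_div _ _ hq' hs', ← map_mul, ← map_mul, ← map_mul, ← map_add,
    ratDeriv_div _ (mul_ne_zero hq hs), ratDeriv_div _ hq, ratDeriv_div _ hs]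
  simp only [derivative_mul, map_add, map_sub, map_mul]
  field_simp
  ring

theorem ratDeriv_mul (f g : RatFunc ℚ) :
    ratDeriv (f * g) = f * ratDeriv g + g * ratDeriv f := by
  induction f using RatFunc.induction_on with | f p q hq =>
  induction g using RatFunc.induction_on with | f r s hs =>
  have hq' := RatFunc.algebraMap_ne_zero hq
  have hs' := RatFunc.algebraMap_ne_zero hs
  rw [div_mul_div_comm, ← map_mul, ← map_mul,
    ratDeriv_div _ (mul_ne_zero hq hs), ratDeriv_div _ hq, ratDeriv_div _ hs]
  simp only [derivative_mul, map_add, map_sub, map_mul]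
  field_simp
  ring

theorem ratDeriv_X : ratDeriv RatFunc.X = 1 := by
  simpa using ratDeriv_div X one_ne_zero

/-- `ratDeriv` bundled as the derivation `d/dq` of `ℚ(q)`. -/
noncomputable def ratDerivation : Derivation ℚ (RatFunc ℚ) (RatFunc ℚ) :=
  .mk' (AddMonoidHom.mk' ratDeriv ratDeriv_add).toRatLinearMap ratDeriv_mul

end RatDeriv

/-- The derivative with respect to `q` of a `q`-holonomic sequence is `q`-holonomic. -/
theorem deriv_qHolonomic (f : ℕ → RatFunc ℚ) (hf : IsQHolonomic f) :
    IsQHolonomic (fun n => ratDeriv (f n)) :=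
  (isQHolonomic_iff_mem_oreFinite _).2 (deriv_qHolonomic_general ratDerivation ratDeriv_X
    ((isQHolonomic_iff_mem_oreFinite f).1 hf))
end

section
/- Let l ≥ 1, let B be an l×l matrix whose entries are polynomials in ℂ[x], and let (x_n)_{n∈ℕ} be a sequence of vectors in ℂ^l satisfying the first-order linear recursion x_{n+1} = B(n)·x_n for all n ∈ ℕ, where B(n) denotes the complex matrix obtained by evaluating every entry of B at x = n. Then for every index i ∈ {1,…,l}, the sequence of complex numbers ((x_n)_i)_{n∈ℕ} given by the i-th coordinate of x_n is holonomic. -/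
/-- A sequence `(g_n)` of complex numbers is holonomic if there are `d ≥ 0` and
polynomials `c_0, …, c_d ∈ ℂ[x]` with `c_d ≠ 0` such that
`c_d(n) g_{n+d} + ⋯ + c_0(n) g_n = 0` for all `n`. -/
def IsHolonomic (g : ℕ → ℂ) : Prop :=
  ∃ (d : ℕ) (c : Fin (d + 1) → Polynomial ℂ),
    c (Fin.last d) ≠ 0 ∧
    ∀ n : ℕ, ∑ j : Fin (d + 1), (c j).eval (n : ℂ) * g (n + j) = 0

/-!
Substituting the recursion repeatedly expresses each shift `g (n + k)` of a coordinate `g` as a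
polynomial row vector `v_k`, evaluated at `n`, times `x n`. The infinitely many `v_k` live in the
module `ℂ[X]^l` of finite rank, so they satisfy a nontrivial linear relation over `ℂ[X]`, and
evaluating that relation at `n` against `x n` gives a recurrence for `g`.
-/

open Polynomial Matrix

section EvalPairing

variable {R ι : Type*} [CommSemiring R] [Fintype ι]

/-- The pairing `p ↦ p(r) · y` of polynomial row vectors with a fixed column vector `y`. It is
semilinear over evaluation at `r`, so it turns `R[X]`-linear relations between rows into linear
relations over `R`. -/
noncomputable def evalPairing (r : R) (y : ι → R) : (ι → R[X]) →ₛₗ[evalRingHom r] R where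
  toFun p := (evalRingHom r ∘ p) ⬝ᵥ y
  map_add' p q := by simp [dotProduct, add_mul, Finset.sum_add_distrib]
  map_smul' a p := by simp [dotProduct, mul_assoc, Finset.mul_sum]

theorem evalPairing_apply (r : R) (y : ι → R) (p : ι → R[X]) :
    evalPairing r y p = (evalRingHom r ∘ p) ⬝ᵥ y :=
  rfl

theorem evalPairing_single_one [DecidableEq ι] (r : R) (y : ι → R) (i : ι) :
    evalPairing r y (Pi.single i 1) = y i := by
  simp [evalPairing_apply, dotProduct, Pi.single_apply, apply_ite (eval r)]

/-- The row vector `p(X + 1) B(X)`, which represents the shift of the sequence `p(n) · x_n` when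
`x_{n+1} = B(n) x_n`. -/
noncomputable def shiftRow (B : Matrix ι ι R[X]) (p : ι → R[X]) : ι → R[X] :=
  (fun j => taylor 1 (p j)) ᵥ* B

theorem evalPairing_shiftRow (B : Matrix ι ι R[X]) (r : R) (y : ι → R) (p : ι → R[X]) :
    evalPairing r y (shiftRow B p) = evalPairing (r + 1) (B.map (eval r) *ᵥ y) p := by
  have eval_shiftRow :
      evalRingHom r ∘ shiftRow B p = (evalRingHom (r + 1) ∘ p) ᵥ* B.map (eval r) := by
    ext j
    simp [shiftRow, vecMul, dotProduct, eval_finsetSum, taylor_eval]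
  rw [evalPairing_apply, evalPairing_apply, eval_shiftRow, dotProduct_mulVec]

theorem evalPairing_iterate_shiftRow {B : Matrix ι ι R[X]} {x : ℕ → ι → R}
    (hx : ∀ n : ℕ, x (n + 1) = B.map (eval (n : R)) *ᵥ x n) (p : ι → R[X]) (k n : ℕ) :
    evalPairing (n : R) (x n) ((shiftRow B)^[k] p) =
      evalPairing ((n + k : ℕ) : R) (x (n + k)) p := by
  induction k generalizing n with
  | zero => rfl
  | succ k ih =>
    rw [Function.iterate_succ_apply', evalPairing_shiftRow, ← hx, ← Nat.cast_succ, ih (n + 1),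
      Nat.succ_add_eq_add_succ]

end EvalPairing

namespace IsHolonomic

variable {g : ℕ → ℂ}

theorem of_finsuppSum_eq_zero {c : ℕ →₀ ℂ[X]} (hc : c ≠ 0)
    (hg : ∀ n : ℕ, (c.sum fun k a => a.eval (n : ℂ) * g (n + k)) = 0) : IsHolonomic g := by
  have hsupp : c.support.Nonempty := Finsupp.support_nonempty_iff.mpr hc
  let d := c.support.max' hsupp
  have support_subset : c.support ⊆ Finset.range (d + 1) := fun k hk =>
    Finset.mem_range_succ_iff.mpr (c.support.le_max' k hk)
  refine ⟨d, fun j => c j, Finsupp.mem_support_iff.mp (c.support.max'_mem hsupp), fun n => ?_⟩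
  rw [Fin.sum_univ_eq_sum_range (fun k => (c k).eval (n : ℂ) * g (n + k)),
    ← Finsupp.sum_of_support_subset c support_subset (fun k a => a.eval (n : ℂ) * g (n + k))
      (by simp), hg n]

theorem of_shift_eq_evalPairing {ι : Type*} [Fintype ι] {x : ℕ → ι → ℂ} (v : ℕ → ι → ℂ[X])
    (hv : ∀ k n : ℕ, g (n + k) = evalPairing (n : ℂ) (x n) (v k)) : IsHolonomic g := by
  have v_dependent : ¬ LinearIndependent ℂ[X] v := fun h => h.finite_of_isNoetherian.false
  obtain ⟨c, hcv, hc⟩ := not_linearIndependent_iff_linearCombination.mp v_dependent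
  refine of_finsuppSum_eq_zero hc fun n => ?_
  calc (c.sum fun k a => a.eval (n : ℂ) * g (n + k))
      = evalPairing (n : ℂ) (x n) (Finsupp.linearCombination ℂ[X] v c) := by
        simp only [Finsupp.linearCombination_apply, map_finsuppSum, map_smulₛₗ, hv,
          coe_evalRingHom, smul_eq_mul]
    _ = 0 := by rw [hcv, map_zero]

end IsHolonomic

theorem coord_of_matrix_recursion_isHolonomic_general {ι : Type*} [Fintype ι]
    (B : Matrix ι ι ℂ[X]) (x : ℕ → ι → ℂ)
    (hx : ∀ n : ℕ, x (n + 1) = B.map (eval (n : ℂ)) *ᵥ x n) (p : ι → ℂ[X]) :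
    IsHolonomic fun n => evalPairing (n : ℂ) (x n) p :=
  .of_shift_eq_evalPairing (fun k => (shiftRow B)^[k] p) fun k n =>
    (evalPairing_iterate_shiftRow hx p k n).symm

/-- If a sequence of vectors `x_n ∈ ℂˡ` satisfies a first order linear recursion
`x_{n+1} = B(n) x_n` with `B` an `l × l` matrix of polynomials, then every coordinate
of `x_n` is a holonomic sequence. -/
theorem coord_of_matrix_recursion_isHolonomic
    (l : ℕ) (hl : 1 ≤ l) (B : Matrix (Fin l) (Fin l) (Polynomial ℂ))
    (x : ℕ → (Fin l → ℂ))
    (hx : ∀ n : ℕ, x (n + 1) = (B.map (Polynomial.eval (n : ℂ))).mulVec (x n)) :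
    ∀ i : Fin l, IsHolonomic (fun n => x n i) := by
  intro i
  simpa only [evalPairing_single_one] using
    coord_of_matrix_recursion_isHolonomic_general B x hx (Pi.single i 1)
end

section
/- Let N ≥ 1, let v = e^{iπ/N} ∈ ℂ, and let a_1, …, a_r be natural numbers written as a_i = A_i·N + α_i with A_i, α_i ∈ ℕ and 0 ≤ α_i < N. Set a = a_1 + ⋯ + a_r and α = α_1 + ⋯ + α_r. Then the value of the balanced quantum multinomial at v, namely v^{−2Σ_{1≤j<k≤r} a_j a_k}·G(a; a_1,…,a_r)(v²) (with the convention A² = v, i.e. A⁴ = q = v²), equals (−1)^{Σ_{1≤j<k≤r}(N·A_jA_k + α_jA_k + A_jα_k)} · ((A_1+⋯+A_r)! / (A_1!⋯A_r!)) · v^{−2Σ_{1≤j<k≤r} α_j α_k}·G(α; α_1,…,α_r)(v²). Correction to the exponents: the balanced multinomial in the variable v = A² is v^{−Σ_{j<k} a_j a_k}·G(a; a_1,…,a_r)(v²), and the identity reads v^{−Σ_{j<k} a_j a_k}·G(a; a_1,…,a_r)(v²) = (−1)^{Σ_{j<k}(N·A_jA_k + α_jA_k + A_jα_k)} · ((ΣA_i)!/(∏A_i!))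 · v^{−Σ_{j<k} α_j α_k}·G(α; α_1,…,α_r)(v²). -/
/-- The set of ordered pairs `(j,k)` with `j < k` in `Fin r × Fin r`. -/
def finPairs (r : ℕ) : Finset (Fin r × Fin r) :=
  Finset.filter (fun p : Fin r × Fin r => p.1 < p.2) Finset.univ

/-!
The idea is a `q`-Lucas congruence modulo the cyclotomic polynomial `Φ_N`. Each symbol
`(x; x)_{BN + β}` contains exactly `B` full periods of `N` consecutive exponents. Extracting one
factor `1 - x^N` per period leaves a cofactor whose value at a primitive `N`-th root of unity is
`B! * c^B * (q; q)_β`, with `c = (q; q)_{N-1}`. In the Gaussian multinomial the powers of `1 - x^N`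
and of `c` cancel, and the factorials form the ordinary multinomial coefficient. If the residues
sum to at least `N`, a factor `1 - x^N` survives on both sides and both values vanish. This needs
nonzero factorials, so it is carried out at a complex root of unity; since `Φ_N` is the minimal
polynomial of that root over `ℤ`, the congruence holds in `ℤ[X]` and specializes to every
characteristic. Finally, the balancing power of `v` contributes the sign because `v^N = -1`.
-/

open Polynomial

/-- The `q`-Pochhammer symbol `(x; x)_n = ∏_{j=1}^{n} (1 - x^j)` as a polynomial in `x`. -/
noncomputable def qPochhammer (n : ℕ) : ℤ[X] :=
  ∏ j ∈ Finset.range n, (1 - X ^ (j + 1))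

/-- `G` is the Gaussian multinomial polynomial of the family `a` over `s`. The defining quotient
of `q`-Pochhammer symbols is encoded as a product identity in `ℤ[X]`, which determines `G`. -/
def IsGaussMultinomial {ι : Type*} (s : Finset ι) (a : ι → ℕ) (G : ℤ[X]) : Prop :=
  G * ∏ i ∈ s, qPochhammer (a i) = qPochhammer (∑ i ∈ s, a i)

/-- The cofactor of `(1 - x^N)^B` in `(x; x)_{BN + β}`: each factor `1 - x^{(i+1)N}` of the
`q`-Pochhammer symbol is replaced by its quotient by `1 - x^N`, a geometric sum. -/
noncomputable def qPochhammerCofactor (N B β : ℕ) : ℤ[X] :=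
  (∏ i ∈ Finset.range B, (∏ j ∈ Finset.range (N - 1), (1 - X ^ (i * N + j + 1))) *
      ∑ k ∈ Finset.range (i + 1), (X ^ N) ^ k) *
    ∏ j ∈ Finset.range β, (1 - X ^ (B * N + j + 1))

lemma qPochhammer_add (m n : ℕ) :
    qPochhammer (m + n) = qPochhammer m * ∏ j ∈ Finset.range n, (1 - X ^ (m + j + 1)) :=
  Finset.prod_range_add _ _ _

lemma prod_range_one_sub_X_pow_eq_mul_geom_sum {N : ℕ} (hN : 0 < N) (i : ℕ) :
    ∏ j ∈ Finset.range N, (1 - X ^ (i * N + j + 1) : ℤ[X]) =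
      (1 - X ^ N) * ((∏ j ∈ Finset.range (N - 1), (1 - X ^ (i * N + j + 1))) *
        ∑ k ∈ Finset.range (i + 1), (X ^ N) ^ k) := by
  obtain ⟨M, rfl⟩ := Nat.exists_eq_add_one.2 hN
  rw [mul_left_comm, mul_neg_geom_sum, ← pow_mul, Finset.prod_range_succ, Nat.add_sub_cancel]
  ring

lemma qPochhammer_mul {N : ℕ} (hN : 0 < N) (B : ℕ) :
    qPochhammer (B * N) = (1 - X ^ N) ^ B * qPochhammerCofactor N B 0 := by
  induction B with
  | zero => simp [qPochhammer, qPochhammerCofactor]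
  | succ B ih =>
    rw [add_one_mul, qPochhammer_add, ih, prod_range_one_sub_X_pow_eq_mul_geom_sum hN]
    simp only [qPochhammerCofactor, Finset.prod_range_succ, Finset.prod_range_zero]
    ring

lemma qPochhammer_mul_add {N : ℕ} (hN : 0 < N) (B β : ℕ) :
    qPochhammer (B * N + β) = (1 - X ^ N) ^ B * qPochhammerCofactor N B β := by
  rw [qPochhammer_add, qPochhammer_mul hN]
  simp only [qPochhammerCofactor, Finset.prod_range_zero, mul_one, mul_assoc]

section Evaluation

variable {R : Type*} [CommRing R] {q : R} {N : ℕ}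

lemma aeval_prod_range_one_sub_X_pow_of_pow_eq_one {m : ℕ} (hq : q ^ m = 1) (n : ℕ) :
    aeval q (∏ j ∈ Finset.range n, (1 - X ^ (m + j + 1) : ℤ[X])) = aeval q (qPochhammer n) := by
  simp [qPochhammer, map_prod, add_assoc, pow_add _ m, hq]

lemma aeval_qPochhammerCofactor (hq : q ^ N = 1) (B β : ℕ) :
    aeval q (qPochhammerCofactor N B β) =
      B.factorial * aeval q (qPochhammer (N - 1)) ^ B * aeval q (qPochhammer β) := by
  have pow_mul_eq_one (i : ℕ) : q ^ (i * N) = 1 := by rw [mul_comm, pow_mul, hq, one_pow]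
  have geom_sum_eq (i : ℕ) :
      aeval q (∑ k ∈ Finset.range (i + 1), (X ^ N) ^ k : ℤ[X]) = (i + 1 : ℕ) := by
    simp [hq]
  simp only [qPochhammerCofactor, map_mul, map_prod _ _ (Finset.range B), geom_sum_eq,
    aeval_prod_range_one_sub_X_pow_of_pow_eq_one (pow_mul_eq_one _), Finset.prod_mul_distrib,
    Finset.prod_const, Finset.card_range, ← Nat.cast_prod, Finset.prod_range_add_one_eq_factorial]
  ring

lemma aeval_qPochhammer_ne_zero [IsDomain R] (hq : IsPrimitiveRoot q N) {n : ℕ} (hn : n < N) :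
    aeval q (qPochhammer n) ≠ 0 := by
  simp only [qPochhammer, map_prod, map_sub, map_one, map_pow, aeval_X, Finset.prod_ne_zero_iff,
    Finset.mem_range]
  intro j hj
  exact sub_ne_zero.2 (hq.pow_ne_one_of_pos_of_lt j.succ_ne_zero (by lia)).symm

end Evaluation

namespace IsGaussMultinomial

variable {ι : Type*} {s : Finset ι} {A α : ι → ℕ} {N : ℕ} {G Gα : ℤ[X]}

lemma mul_prod_qPochhammerCofactor (hG : IsGaussMultinomial s (fun i ↦ A i * N + α i) G)
    (hN : 0 < N) :
    G * ∏ i ∈ s, qPochhammerCofactor N (A i) (α i) =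
      (1 - X ^ N) ^ ((∑ i ∈ s, α i) / N) *
        qPochhammerCofactor N (∑ i ∈ s, A i + (∑ i ∈ s, α i) / N) ((∑ i ∈ s, α i) % N) := by
  have one_sub_ne_zero : (1 - X ^ N : ℤ[X]) ≠ 0 := fun h ↦ by
    simpa [hN.ne'] using congrArg (eval 0) h
  have sum_eq : ∑ i ∈ s, (A i * N + α i) =
      (∑ i ∈ s, A i + (∑ i ∈ s, α i) / N) * N + (∑ i ∈ s, α i) % N := by
    rw [Finset.sum_add_distrib, ← Finset.sum_mul, add_mul, add_assoc, Nat.div_add_mod']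
  apply mul_left_cancel₀ (pow_ne_zero (∑ i ∈ s, A i) one_sub_ne_zero)
  calc (1 - X ^ N) ^ (∑ i ∈ s, A i) * (G * ∏ i ∈ s, qPochhammerCofactor N (A i) (α i))
      = G * ∏ i ∈ s, qPochhammer (A i * N + α i) := by
        simp only [qPochhammer_mul_add hN, Finset.prod_mul_distrib, Finset.prod_pow_eq_pow_sum]
        ring
    _ = qPochhammer (∑ i ∈ s, (A i * N + α i)) := hG
    _ = _ := by rw [sum_eq, qPochhammer_mul_add hN, pow_add, mul_assoc]

lemma aeval_mul_prod {R : Type*} [CommRing R] {q : R}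
    (hG : IsGaussMultinomial s (fun i ↦ A i * N + α i) G) (hN : 0 < N) (hq : q ^ N = 1) :
    aeval q G * ((∏ i ∈ s, ((A i).factorial : R)) *
        aeval q (qPochhammer (N - 1)) ^ (∑ i ∈ s, A i) * ∏ i ∈ s, aeval q (qPochhammer (α i))) =
      0 ^ ((∑ i ∈ s, α i) / N) * ((∑ i ∈ s, A i + (∑ i ∈ s, α i) / N).factorial *
        aeval q (qPochhammer (N - 1)) ^ (∑ i ∈ s, A i + (∑ i ∈ s, α i) / N) *
          aeval q (qPochhammer ((∑ i ∈ s, α i) % N))) := by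
  simpa [aeval_qPochhammerCofactor hq, Finset.prod_mul_distrib, Finset.prod_pow_eq_pow_sum, hq]
    using congrArg (aeval q) (hG.mul_prod_qPochhammerCofactor hN)

lemma aeval_eq_multinomial_mul_of_charZero {R : Type*} [CommRing R] [IsDomain R] [CharZero R]
    {q : R} (hG : IsGaussMultinomial s (fun i ↦ A i * N + α i) G)
    (hGα : IsGaussMultinomial s α Gα) (hN : 0 < N) (hα : ∀ i ∈ s, α i < N)
    (hq : IsPrimitiveRoot q N) :
    aeval q G = Nat.multinomial s A * aeval q Gα := by
  -- Taking all quotients `A i = 0` evaluates `Gα` with the same carry `(∑ α i) / N` as `G`.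
  have hGα' : IsGaussMultinomial s (fun i ↦ 0 * N + α i) Gα := by simpa using hGα
  have eval_G := hG.aeval_mul_prod hN hq.pow_eq_one
  have eval_Gα := hGα'.aeval_mul_prod hN hq.pow_eq_one
  have multinomial_spec : (∏ i ∈ s, ((A i).factorial : R)) * Nat.multinomial s A =
      (∑ i ∈ s, A i).factorial := by exact_mod_cast Nat.multinomial_spec s A
  have factorials_ne_zero : ∏ i ∈ s, ((A i).factorial : R) ≠ 0 :=
    Finset.prod_ne_zero_iff.2 fun i _ ↦ Nat.cast_ne_zero.2 (A i).factorial_ne_zero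
  have period_ne_zero : aeval q (qPochhammer (N - 1)) ^ (∑ i ∈ s, A i) ≠ 0 :=
    pow_ne_zero _ (aeval_qPochhammer_ne_zero hq (by lia))
  have residues_ne_zero : ∏ i ∈ s, aeval q (qPochhammer (α i)) ≠ 0 :=
    Finset.prod_ne_zero_iff.2 fun i hi ↦ aeval_qPochhammer_ne_zero hq (hα i hi)
  apply mul_right_cancel₀ (mul_ne_zero (mul_ne_zero factorials_ne_zero period_ne_zero)
    residues_ne_zero)
  rw [eval_G]
  generalize (∑ i ∈ s, α i) / N = d at eval_Gα ⊢
  simp only [Nat.factorial_zero, Nat.cast_one, Finset.prod_const_one, Finset.sum_const_zero,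
    pow_zero, one_mul, zero_add] at eval_Gα
  rcases eq_or_ne d 0 with rfl | hd
  · simp only [pow_zero, one_mul, Nat.factorial_zero, Nat.cast_one, add_zero] at eval_Gα ⊢
    rw [← multinomial_spec, ← eval_Gα]
    ring
  · have aeval_Gα_eq_zero : aeval q Gα = 0 := by simpa [hd, residues_ne_zero] using eval_Gα
    simp [hd, aeval_Gα_eq_zero]

theorem cyclotomic_dvd_sub_multinomial_mul (hG : IsGaussMultinomial s (fun i ↦ A i * N + α i) G)
    (hGα : IsGaussMultinomial s α Gα) (hN : 0 < N) (hα : ∀ i ∈ s, α i < N) :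
    cyclotomic N ℤ ∣ G - (Nat.multinomial s A : ℤ[X]) * Gα := by
  have hζ := Complex.isPrimitiveRoot_exp N hN.ne'
  rw [cyclotomic_eq_minpoly hζ hN]
  apply minpoly.isIntegrallyClosed_dvd (hζ.isIntegral hN)
  simp [hG.aeval_eq_multinomial_mul_of_charZero hGα hN hα hζ]

theorem aeval_eq_multinomial_mul {R : Type*} [CommRing R] {q : R}
    (hG : IsGaussMultinomial s (fun i ↦ A i * N + α i) G) (hGα : IsGaussMultinomial s α Gα)
    (hN : 0 < N) (hα : ∀ i ∈ s, α i < N) (hq : (cyclotomic N R).IsRoot q) :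
    aeval q G = Nat.multinomial s A * aeval q Gα := by
  have aeval_cyclotomic : aeval q (cyclotomic N ℤ) = 0 := by
    rw [aeval_def, eval₂_eq_eval_map, map_cyclotomic]
    exact hq
  have aeval_sub := aeval_eq_zero_of_dvd_aeval_eq_zero
    (hG.cyclotomic_dvd_sub_multinomial_mul hGα hN hα) aeval_cyclotomic
  simpa [sub_eq_zero] using aeval_sub

end IsGaussMultinomial

lemma sum_mul_add_mul_add_eq {ι : Type*} (t : Finset (ι × ι)) (N : ℕ) (A α : ι → ℕ) :
    ∑ p ∈ t, (A p.1 * N + α p.1) * (A p.2 * N + α p.2) =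
      N * ∑ p ∈ t, (N * A p.1 * A p.2 + α p.1 * A p.2 + A p.1 * α p.2) +
        ∑ p ∈ t, α p.1 * α p.2 := by
  rw [Finset.mul_sum, ← Finset.sum_add_distrib]
  exact Finset.sum_congr rfl fun p _ ↦ by ring

lemma zpow_neg_mul_add_of_pow_eq_neg_one {K : Type*} [Field K] {v : K} {N : ℕ}
    (hv : v ^ N = -1) (m n : ℕ) :
    v ^ (-((N * m + n : ℕ) : ℤ)) = (-1) ^ m * v ^ (-(n : ℤ)) := by
  rw [zpow_neg, zpow_natCast, zpow_neg, zpow_natCast, pow_add, pow_mul, hv, mul_inv, ← inv_pow,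
    inv_neg_one]

lemma isPrimitiveRoot_exp_pi_mul_I_div {N : ℕ} (hN : 0 < N) :
    IsPrimitiveRoot (Complex.exp (Real.pi * Complex.I / N)) (2 * N) := by
  convert Complex.isPrimitiveRoot_exp (2 * N) (by positivity) using 2
  push_cast
  rw [mul_assoc, mul_div_mul_left _ _ two_ne_zero]

theorem balanced_quantum_multinomial_at_root_of_unity_general {K : Type*} [Field K] {N : ℕ}
    (hN : 0 < N) {r : ℕ} {A α a : Fin r → ℕ} (hα : ∀ i, α i < N)
    (ha : ∀ i, a i = A i * N + α i) {G Gα : ℤ[X]}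
    (hG : IsGaussMultinomial Finset.univ a G) (hGα : IsGaussMultinomial Finset.univ α Gα)
    {v : K} (hv : IsPrimitiveRoot v (2 * N)) :
    v ^ (-((∑ p ∈ finPairs r, a p.1 * a p.2 : ℕ) : ℤ)) * aeval (v ^ 2) G =
      (-1) ^ (∑ p ∈ finPairs r, (N * A p.1 * A p.2 + α p.1 * A p.2 + A p.1 * α p.2)) *
        (Nat.multinomial Finset.univ A : K) *
        (v ^ (-((∑ p ∈ finPairs r, α p.1 * α p.2 : ℕ) : ℤ)) * aeval (v ^ 2) Gα) := by
  obtain rfl : a = fun i ↦ A i * N + α i := funext ha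
  have pow_N : v ^ N = -1 := (hv.pow (by positivity) (mul_comm 2 N)).eq_neg_one_of_two_right
  have sq_primitive : IsPrimitiveRoot (v ^ 2) N := hv.pow (by positivity) rfl
  rw [hG.aeval_eq_multinomial_mul hGα hN (fun i _ ↦ hα i) (sq_primitive.isRoot_cyclotomic hN),
    sum_mul_add_mul_add_eq, zpow_neg_mul_add_of_pow_eq_neg_one pow_N]
  ring

/-- Evaluation of the balanced quantum multinomial at `v = e^{iπ/N}`: with
`a_i = A_i N + α_i`, `0 ≤ α_i < N`, and `G`, `Gα` the Gaussian multinomial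
polynomials for the `a_i`'s and the `α_i`'s respectively (characterized by
`G(x) ∏_i ∏_{j=1}^{a_i} (1-x^j) = ∏_{j=1}^{a}(1-x^j)`), the balanced quantum
multinomial `v^{-Σ_{j<k} a_j a_k} G(a;a_1,…,a_r)(v²)` equals
`(-1)^{Σ_{j<k}(N A_j A_k + α_j A_k + A_j α_k)}` times the ordinary multinomial
coefficient of the `A_i`'s times `v^{-Σ_{j<k} α_j α_k} G(α;α_1,…,α_r)(v²)`. -/
theorem balanced_quantum_multinomial_at_root_of_unity
    (N : ℕ) (hN : 1 ≤ N) (r : ℕ) (A α : Fin r → ℕ) (hα : ∀ i, α i < N)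
    (a : Fin r → ℕ) (ha : ∀ i, a i = A i * N + α i)
    (G Gα : Polynomial ℤ)
    (hG : G * ∏ i, ∏ j ∈ Finset.range (a i), (1 - Polynomial.X ^ (j + 1)) =
      ∏ j ∈ Finset.range (∑ i, a i), (1 - Polynomial.X ^ (j + 1)))
    (hGα : Gα * ∏ i, ∏ j ∈ Finset.range (α i), (1 - Polynomial.X ^ (j + 1)) =
      ∏ j ∈ Finset.range (∑ i, α i), (1 - Polynomial.X ^ (j + 1)))
    (v : ℂ) (hv : v = Complex.exp (Real.pi * Complex.I / N)) :
    v ^ (-((∑ p ∈ finPairs r, a p.1 * a p.2 : ℕ) : ℤ)) * Polynomial.aeval (v ^ 2) G =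
      (-1 : ℂ) ^ (∑ p ∈ finPairs r, (N * A p.1 * A p.2 + α p.1 * A p.2 + A p.1 * α p.2)) *
        (Nat.multinomial Finset.univ A : ℂ) *
        (v ^ (-((∑ p ∈ finPairs r, α p.1 * α p.2 : ℕ) : ℤ)) * Polynomial.aeval (v ^ 2) Gα) := by
  subst hv
  exact balanced_quantum_multinomial_at_root_of_unity_general hN hα ha hG hGα
    (isPrimitiveRoot_exp_pi_mul_I_div hN)
end
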